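/- (Theorem 4.1(v), chamber C₃₂₁.) Uniformly over all λ ∈ C⁺ and all X ∈ a with x3 ≥ x2 ≥ x1, one has E_k(X,λ) ≍ e^{⟨λ,X⁺⟩} / [ (1+α_λ α_{X⁺})^{k} (1+β_λ β_{X⁺})^{k} (1+γ_λ γ_{X⁺})^{k+1} ]. -/

import Mathlib

open Real MeasureTheory

/-- The rank-one Dunkl kernel `E_k^{rk1}(x,v)`. -/
noncomputable def Erk1 (k x v : ℝ) : ℝ :=
  (Real.Gamma (k + 1/2) / (Real.sqrt Real.pi * Real.Gamma k)) *
    ∫ z in (-1 : ℝ)..1, Real.exp (z * x * v) * (1 - z) ^ (k - 1) * (1 + z) ^ k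

/-- The normalized modified Bessel function `𝒥_a(y)`, for `a > -1/2`. -/
noncomputable def besselJ (a y : ℝ) : ℝ :=
  (Real.Gamma (a + 1) / (Real.sqrt Real.pi * Real.Gamma (a + 1/2))) *
    ∫ z in (-1 : ℝ)..1, Real.exp (y * z) * (1 - z ^ 2) ^ (a - 1/2)

/-- `W_k(λ,ν)`. -/
noncomputable def Wk (k l1 l2 l3 n1 n2 : ℝ) : ℝ :=
  ((l1 - n1) * (l1 - n2) * (n1 - l2) * (l2 - n2) * (n1 - l3) * (n2 - l3)) ^ (k - 1)

/-- `V(λ) = (λ1-λ2)(λ1-λ3)(λ2-λ3)`. -/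
def Vlam (l1 l2 l3 : ℝ) : ℝ := (l1 - l2) * (l1 - l3) * (l2 - l3)

/-- The `A₂` Dunkl kernel `E_k(X,λ)`, defined via the rank-one kernel formula. -/
noncomputable def EkA2 (k x1 x2 x3 l1 l2 l3 : ℝ) : ℝ :=
  (3 * Real.Gamma (3 * k) / (Vlam l1 l2 l3 ^ (2 * k) * Real.Gamma k ^ 2)) *
    ∫ n2 in l3..l2, ∫ n1 in l2..l1,
      ((n1 - l2) * (l1 - n2) * Erk1 k ((x1 - x2) / 2) (n1 - n2)
        + (l1 - n1) * (l2 - n2) * Erk1 k (-(x1 - x2) / 2) (n1 - n2))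
      * ((n1 - l3) * (n2 - l3)) * Real.exp ((x1 + x2 - 2 * x3) * (n1 + n2) / 2)
      * Wk k l1 l2 l3 n1 n2


lemma half_rpow (e x : ℝ) (h1 : 1/2 ≤ x) (h2 : x ≤ 1) :
    (2:ℝ)^(-|e|) ≤ x^e ∧ x^e ≤ (2:ℝ)^|e| := by
  have hx : 0 < x := by linarith
  have hh : ∀ e : ℝ, (1/2:ℝ)^e = 2^(-e) := by
    intro e; rw [one_div, Real.inv_rpow (by norm_num), Real.rpow_neg (by norm_num)]
  rcases le_total 0 e with he | he
  · rw [abs_of_nonneg he]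
    constructor
    · rw [← hh]; exact Real.rpow_le_rpow (by norm_num) h1 he
    · exact (Real.rpow_le_one hx.le h2 he).trans (Real.one_le_rpow (by norm_num) he)
  · rw [abs_of_nonpos he]
    constructor
    · exact (Real.rpow_le_one_of_one_le_of_nonpos (by norm_num) (by linarith)).trans
        (Real.one_le_rpow_of_pos_of_le_one_of_nonpos hx h2 he)
    · rw [← hh]; exact Real.rpow_le_rpow_of_nonpos (by norm_num) h1 he

lemma pow_exp (e : ℝ) (he : 0 < e) (x : ℝ) (hx : 0 ≤ x) :
    (1+x)^e * Real.exp (-x) ≤ (1+2*e)^e * Real.exp (-(x/2)) := by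
  have h1 : 1 + x ≤ (1+2*e) * Real.exp (x/(2*e)) := by
    have := Real.add_one_le_exp (x/(2*e))
    have h2 : 1 + x ≤ (1+2*e) * (x/(2*e)+1) := by
      have : (1+2*e) * (x/(2*e)+1) = x/(2*e) + 1 + x + 2*e := by field_simp; ring
      rw [this]
      have : 0 ≤ x/(2*e) := by positivity
      linarith
    exact h2.trans (mul_le_mul_of_nonneg_left this (by positivity))
  have h3 : (1+x)^e ≤ (1+2*e)^e * Real.exp (x/2) := by
    calc (1+x)^e ≤ ((1+2*e) * Real.exp (x/(2*e)))^e := Real.rpow_le_rpow (by positivity) h1 he.le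
      _ = _ := by
        rw [Real.mul_rpow (by positivity) (by positivity), ← Real.exp_mul]
        congr 2; field_simp
  calc _ ≤ ((1+2*e)^e * Real.exp (x/2)) * Real.exp (-x) :=
        mul_le_mul_of_nonneg_right h3 (by positivity)
    _ = _ := by rw [mul_assoc, ← Real.exp_add]; congr 2; ring

noncomputable def Phi (A B c : ℝ) : ℝ :=
  ∫ s in (0:ℝ)..1, Real.exp (-(c*s)) * s^(A-1) * (1-s)^(B-1)

lemma phi_dom (A B c s : ℝ) (hc : 0 ≤ c) (h0 : 0 < s) (h1 : s < 1) :
    Real.exp (-(c*s)) * s^(A-1) * (1-s)^(B-1) ≤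
      2^|B-1| * Real.exp 1 * (s^(A-1) * Real.exp (-((1+c)*s))) + 2^|A-1| * Real.exp (-(c/2)) * (1-s)^(B-1) := by
  have hs : 0 < s^(A-1) := Real.rpow_pos_of_pos h0 _
  have hs' : 0 < (1-s)^(B-1) := Real.rpow_pos_of_pos (by linarith) _
  rcases le_total s (1/2) with h | h
  · have h2 := (half_rpow (B-1) (1-s) (by linarith) (by linarith)).2
    have h3 : Real.exp (-(c*s)) ≤ Real.exp 1 * Real.exp (-((1+c)*s)) := by
      rw [← Real.exp_add]; apply Real.exp_le_exp.2; nlinarith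
    have : Real.exp (-(c*s)) * s^(A-1) * (1-s)^(B-1) ≤
      (Real.exp 1 * Real.exp (-((1+c)*s))) * s^(A-1) * 2^|B-1| := by gcongr
    have h5 : 0 ≤ (2:ℝ)^|A-1| * Real.exp (-(c/2)) * (1-s)^(B-1) := by positivity
    nlinarith
  · have h2 := (half_rpow (A-1) s (by linarith) (by linarith)).2
    have h3 : Real.exp (-(c*s)) ≤ Real.exp (-(c/2)) := by
      apply Real.exp_le_exp.2; nlinarith
    have : Real.exp (-(c*s)) * s^(A-1) * (1-s)^(B-1) ≤
      Real.exp (-(c/2)) * 2^|A-1| * (1-s)^(B-1) := by gcongr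
    have h5 : 0 ≤ (2:ℝ)^|B-1| * Real.exp 1 * (s^(A-1) * Real.exp (-((1+c)*s))) := by positivity
    nlinarith

lemma dom_int1 (A c : ℝ) (hA : 0 < A) (hc : 0 ≤ c) :
    IntegrableOn (fun s : ℝ => s^(A-1) * Real.exp (-((1+c)*s))) (Set.Ioi 0) := by
  have := integrableOn_rpow_mul_exp_neg_mul_rpow (s := A-1) (p := 1) (b := 1+c) (by linarith) (by norm_num) (by linarith)
  refine this.congr_fun (fun s _ => ?_) measurableSet_Ioi
  simp only [Real.rpow_one]; congr 2; ring

lemma dom_int2 (B : ℝ) (hB : 0 < B) :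
    IntervalIntegrable (fun s : ℝ => (1-s)^(B-1)) volume 0 1 := by
  have h := intervalIntegral.intervalIntegrable_rpow' (a := 1) (b := 0) (r := B-1) (by linarith)
  have := h.comp_sub_left 1
  simpa using this

lemma phi_int (A B c : ℝ) (hA : 0 < A) (hB : 0 < B) (hc : 0 ≤ c) :
    IntervalIntegrable (fun s => Real.exp (-(c*s)) * s^(A-1) * (1-s)^(B-1)) volume 0 1 := by
  rw [intervalIntegrable_iff_integrableOn_Ioo_of_le zero_le_one]
  have h2 := dom_int2 B hB
  rw [intervalIntegrable_iff_integrableOn_Ioo_of_le zero_le_one] at h2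
  have h1 := (dom_int1 A c hA hc).mono_set (Set.Ioo_subset_Ioi_self : Set.Ioo (0:ℝ) 1 ⊆ Set.Ioi 0)
  refine ((h1.const_mul (2^|B-1| * Real.exp 1)).add (h2.const_mul (2^|A-1| * Real.exp (-(c/2))))).mono' ?_ ?_
  · apply Measurable.aestronglyMeasurable; fun_prop
  · refine (ae_restrict_iff' measurableSet_Ioo).2 (Filter.Eventually.of_forall ?_)
    intro s hs
    rw [Real.norm_of_nonneg]
    · exact phi_dom A B c s hc hs.1 hs.2
    · have := Real.rpow_nonneg hs.1.le (A-1)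
      have := Real.rpow_nonneg (sub_nonneg.2 hs.2.le) (B-1)
      positivity

lemma phi_upper (A B : ℝ) (hA : 0 < A) (hB : 0 < B) : ∃ C : ℝ, 0 < C ∧ ∀ c : ℝ, 0 ≤ c →
    Phi A B c ≤ C * (1+c)^(-A) := by
  have hG := Real.Gamma_pos_of_pos hA
  set β := ∫ s in (0:ℝ)..1, (1-s)^(B-1) with hβ
  have hβ0 : 0 ≤ β := by
    apply intervalIntegral.integral_nonneg zero_le_one
    intro s hs; exact Real.rpow_nonneg (by linarith [hs.2]) _
  refine ⟨2^|B-1| * Real.exp 1 * Real.Gamma A + 2^|A-1| * ((1+2*A)^A*2^A) * β, by positivity, ?_⟩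
  intro c hc
  have h2 := dom_int2 B hB
  have h1 := (dom_int1 A c hA hc).mono_set (Set.Ioo_subset_Ioi_self : Set.Ioo (0:ℝ) 1 ⊆ Set.Ioi 0)
  rw [← intervalIntegrable_iff_integrableOn_Ioo_of_le zero_le_one] at h1
  have hi1 : ∫ s in (0:ℝ)..1, s^(A-1) * Real.exp (-((1+c)*s)) ≤ Real.Gamma A * (1+c)^(-A) := by
    rw [intervalIntegral.integral_of_le zero_le_one]
    calc _ ≤ ∫ s in Set.Ioi (0:ℝ), s^(A-1) * Real.exp (-((1+c)*s)) := by
          apply setIntegral_mono_set (dom_int1 A c hA hc)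
          · refine (ae_restrict_iff' measurableSet_Ioi).2 (Filter.Eventually.of_forall ?_)
            intro s hs
            have := Real.rpow_nonneg (le_of_lt hs) (A-1)
            simp only [Pi.zero_apply]; positivity
          · exact Set.Ioc_subset_Ioi_self.eventuallyLE
      _ = _ := by
          rw [Real.integral_rpow_mul_exp_neg_mul_Ioi hA (by linarith), one_div, Real.inv_rpow (by linarith), Real.rpow_neg (by linarith)]
          ring
  have hexp : Real.exp (-(c/2)) ≤ (1+2*A)^A * 2^A * (1+c)^(-A) := by
    have h := pow_exp A hA (c/2) (by linarith)
    have h3 : Real.exp (-(c/2/2)) ≤ 1 := Real.exp_le_one_iff.2 (by linarith)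
    have h4 : (1+c)^A ≤ 2^A*(1+c/2)^A := by
      rw [← Real.mul_rpow (by norm_num) (by linarith)]
      exact Real.rpow_le_rpow (by linarith) (by linarith) hA.le
    have h6 : (0:ℝ) < (1+c)^A := by positivity
    rw [Real.rpow_neg (by linarith), ← div_eq_mul_inv, le_div_iff₀ h6]
    calc _ ≤ Real.exp (-(c/2)) * (2^A*(1+c/2)^A) := by gcongr
      _ = 2^A * ((1+c/2)^A * Real.exp (-(c/2))) := by ring
      _ ≤ 2^A * ((1+2*A)^A * Real.exp (-(c/2/2))) := by gcongr
      _ ≤ 2^A * ((1+2*A)^A * 1) := by gcongr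
      _ = _ := by ring
  calc Phi A B c ≤ ∫ s in (0:ℝ)..1, (2^|B-1| * Real.exp 1 * (s^(A-1) * Real.exp (-((1+c)*s))) + 2^|A-1| * Real.exp (-(c/2)) * (1-s)^(B-1)) := by
        apply intervalIntegral.integral_mono_on_of_le_Ioo zero_le_one (phi_int A B c hA hB hc)
        · exact (h1.const_mul _).add (h2.const_mul _)
        · intro s hs; exact phi_dom A B c s hc hs.1 hs.2
    _ = 2^|B-1| * Real.exp 1 * (∫ s in (0:ℝ)..1, (s^(A-1) * Real.exp (-((1+c)*s)))) + 2^|A-1| * Real.exp (-(c/2)) * β := by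
        rw [intervalIntegral.integral_add (h1.const_mul _) (h2.const_mul _), intervalIntegral.integral_const_mul, intervalIntegral.integral_const_mul]
    _ ≤ 2^|B-1| * Real.exp 1 * (Real.Gamma A * (1+c)^(-A)) + 2^|A-1| * ((1+2*A)^A * 2^A * (1+c)^(-A)) * β := by gcongr
    _ = _ := by ring

lemma phi_lower (A B : ℝ) (hA : 0 < A) (hB : 0 < B) : ∃ C : ℝ, 0 < C ∧ ∀ c : ℝ, 0 ≤ c →
    C * (1+c)^(-A) ≤ Phi A B c := by
  refine ⟨Real.exp (-1) * 4^(-A) * 2^(-|B-1|) / 2, by positivity, ?_⟩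
  intro c hc
  set w := 1/(4*(1+c)) with hw
  have hc1 : 0 < 1 + c := by linarith
  have hw0 : 0 < w := by positivity
  have hwc : w * (1+c) = 1/4 := by rw [hw]; field_simp
  have hw4 : w ≤ 1/4 := by nlinarith
  have hII := phi_int A B c hA hB hc
  have hsub : ∫ s in w..(2*w), Real.exp (-(c*s)) * s^(A-1) * (1-s)^(B-1) ≤ Phi A B c := by
    unfold Phi
    apply intervalIntegral.integral_mono_interval hw0.le (by linarith) (by linarith) _ hII
    refine (ae_restrict_iff' measurableSet_Ioc).2 (Filter.Eventually.of_forall ?_)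
    intro s hs
    have := Real.rpow_nonneg hs.1.le (A-1)
    have := Real.rpow_nonneg (sub_nonneg.2 hs.2) (B-1)
    simp only [Pi.zero_apply]; positivity
  refine le_trans ?_ hsub
  have hconst : ∫ s in w..(2*w), (Real.exp (-1) * (w^A * (2*w)⁻¹) * 2^(-|B-1|)) ≤ ∫ s in w..(2*w), Real.exp (-(c*s)) * s^(A-1) * (1-s)^(B-1) := by
    apply intervalIntegral.integral_mono_on (by linarith) (by simp)
    · apply hII.mono_set
      rw [Set.uIcc_of_le (by linarith), Set.uIcc_of_le (by linarith)]
      exact Set.Icc_subset_Icc hw0.le (by linarith)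
    · intro s hs
      have hs0 : 0 < s := by linarith [hs.1]
      have e1 : Real.exp (-1) ≤ Real.exp (-(c*s)) := by
        apply Real.exp_le_exp.2; nlinarith [hs.2, mul_le_mul_of_nonneg_left hs.2 hc]
      have e2 : w^A * (2*w)⁻¹ ≤ s^(A-1) := by
        rw [Real.rpow_sub_one hs0.ne', div_eq_mul_inv]
        have := Real.rpow_le_rpow hw0.le hs.1 hA.le
        have := hs.2
        gcongr
      have e3 := (half_rpow (B-1) (1-s) (by linarith [hs.2]) (by linarith)).1
      gcongr
  refine le_trans (le_of_eq ?_) hconst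
  rw [intervalIntegral.integral_const, smul_eq_mul]
  have : w^A = 4^(-A) * (1+c)^(-A) := by
    rw [hw, one_div, Real.inv_rpow (by positivity), Real.mul_rpow (by norm_num) hc1.le, Real.rpow_neg (by norm_num), Real.rpow_neg hc1.le, mul_inv]
  rw [this]; field_simp; ring
lemma alg1 (p q a b : ℝ) (hp : 0 < p) (hq : 0 < q) (ha : 0 ≤ a) (hb : 0 ≤ b) (m : ℝ) (hm : m = p/(1+p*b)) :
    (m+q)/(1+a*(m+q)) ≤ 4 * ((p+q)*(1+(a+b)*q)/(1+(p+q)*(a+b)) / (1+q*a)) ∧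
    ((p+q)*(1+(a+b)*q)/(1+(p+q)*(a+b)) / (1+q*a)) ≤ 4 * ((m+q)/(1+a*(m+q))) := by
  have h1 : (m+q)/(1+a*(m+q)) = (p+q+p*q*b)/(1+p*b+a*(p+q+p*q*b)) := by
    rw [hm]; field_simp; ring
  rw [h1, div_div]
  constructor
  · rw [← mul_div_assoc, div_le_div_iff₀ (by positivity) (by positivity), ← sub_nonneg]
    ring_nf; positivity
  · rw [← mul_div_assoc, div_le_div_iff₀ (by positivity) (by positivity), ← sub_nonneg]
    ring_nf; positivity

lemma alg2 (p q a b : ℝ) (hp : 0 < p) (hq : 0 < q) (ha : 0 ≤ a) (hb : 0 ≤ b) (m : ℝ) (hm : m = p/(1+p*b)) :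
    m*(p+q)/(1+a*(m+q)) + p*q ≤ 4 * (p*((p+q)*(1+(a+b)*q)/(1+(p+q)*(a+b)))) ∧
    p*((p+q)*(1+(a+b)*q)/(1+(p+q)*(a+b))) ≤ 4 * (m*(p+q)/(1+a*(m+q)) + p*q) := by
  have h1 : m*(p+q)/(1+a*(m+q)) + p*q = p*((p+q+q*(1+p*b+a*(p+q+p*q*b)))/(1+p*b+a*(p+q+p*q*b))) := by
    rw [hm]; field_simp; ring
  rw [h1]
  constructor
  · rw [mul_left_comm]
    apply mul_le_mul_of_nonneg_left _ hp.le
    rw [← mul_div_assoc, div_le_div_iff₀ (by positivity) (by positivity), ← sub_nonneg]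
    ring_nf; positivity
  · rw [mul_left_comm]
    apply mul_le_mul_of_nonneg_left _ hp.le
    rw [← mul_div_assoc, div_le_div_iff₀ (by positivity) (by positivity), ← sub_nonneg]
    ring_nf; positivity

lemma erk_pos (k x v : ℝ) (hk : 0 < k) : Erk1 k x v =
    (Real.Gamma (k + 1/2) / (Real.sqrt Real.pi * Real.Gamma k)) * 2^(2*k) * Real.exp (x*v) * Phi k (k+1) (2*(x*v)) := by
  unfold Erk1 Phi
  have h := intervalIntegral.integral_comp_sub_mul (a := 0) (b := 1) (fun z : ℝ => Real.exp (z * x * v) * (1 - z) ^ (k - 1) * (1 + z) ^ k) (c := 2) (by norm_num) 1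
  norm_num at h
  have h' : ∫ z in (-1 : ℝ)..1, Real.exp (z * x * v) * (1 - z) ^ (k - 1) * (1 + z) ^ k = 2^(2*k) * Real.exp (x*v) * ∫ s in (0:ℝ)..1, Real.exp (-(2*(x*v)*s)) * s^(k-1) * (1-s)^(k+1-1) := by
    have h2 : ∫ z in (-1 : ℝ)..1, Real.exp (z * x * v) * (1 - z) ^ (k - 1) * (1 + z) ^ k = 2 * ∫ s in (0:ℝ)..1, Real.exp ((1-2*s) * x * v) * (2*s) ^ (k - 1) * (1 + (1-2*s)) ^ k := by linarith
    rw [h2, ← intervalIntegral.integral_const_mul, ← intervalIntegral.integral_const_mul]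
    apply intervalIntegral.integral_congr
    intro s hs
    rw [Set.uIcc_of_le zero_le_one] at hs
    simp only
    rw [show 1 + (1-2*s) = 2*(1-s) by ring, Real.mul_rpow (by norm_num) hs.1, Real.mul_rpow (by norm_num) (by linarith [hs.2]),
      show (1-2*s)*x*v = x*v + -(2*(x*v)*s) by ring, Real.exp_add, show k+1-1 = k by ring, show 2*k = k + k by ring, Real.rpow_add (by norm_num), Real.rpow_sub_one (by norm_num : (2:ℝ) ≠ 0)]
    ring
  rw [h']; ring

lemma erk_neg (k x v : ℝ) (hk : 0 < k) : Erk1 k x v =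
    (Real.Gamma (k + 1/2) / (Real.sqrt Real.pi * Real.Gamma k)) * 2^(2*k) * Real.exp (-(x*v)) * Phi (k+1) k (2*(-(x*v))) := by
  unfold Erk1 Phi
  have h := intervalIntegral.integral_comp_mul_sub (a := 0) (b := 1) (fun z : ℝ => Real.exp (z * x * v) * (1 - z) ^ (k - 1) * (1 + z) ^ k) (c := 2) (by norm_num) 1
  norm_num at h
  have h' : ∫ z in (-1 : ℝ)..1, Real.exp (z * x * v) * (1 - z) ^ (k - 1) * (1 + z) ^ k = 2^(2*k) * Real.exp (-(x*v)) * ∫ s in (0:ℝ)..1, Real.exp (-(2*(-(x*v))*s)) * s^(k+1-1) * (1-s)^(k-1) := by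
    have h2 : ∫ z in (-1 : ℝ)..1, Real.exp (z * x * v) * (1 - z) ^ (k - 1) * (1 + z) ^ k = 2 * ∫ s in (0:ℝ)..1, Real.exp ((2*s-1) * x * v) * (1 - (2*s-1)) ^ (k - 1) * (2*s) ^ k := by linarith
    rw [h2, ← intervalIntegral.integral_const_mul, ← intervalIntegral.integral_const_mul]
    apply intervalIntegral.integral_congr
    intro s hs
    rw [Set.uIcc_of_le zero_le_one] at hs
    simp only
    rw [show 1 - (2*s-1) = 2*(1-s) by ring, Real.mul_rpow (by norm_num) hs.1, Real.mul_rpow (by norm_num) (by linarith [hs.2]),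
      show (2*s-1)*x*v = -(x*v) + -(2*(-(x*v))*s) by ring, Real.exp_add, show k+1-1 = k by ring, show 2*k = k + k by ring, Real.rpow_add (by norm_num), Real.rpow_sub_one (by norm_num : (2:ℝ) ≠ 0)]
    ring
  rw [h']; ring

lemma sandwich (f : ℝ → ℝ → ℝ) (hf : Measurable (Function.uncurry f)) (g1 h1 g2 h2 : ℝ → ℝ)
    (ig1 : IntervalIntegrable g1 volume 0 1) (ih1 : IntervalIntegrable h1 volume 0 1)
    (ig2 : IntervalIntegrable g2 volume 0 1) (ih2 : IntervalIntegrable h2 volume 0 1)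
    (h0 : ∀ u ∈ Set.Ioo (0:ℝ) 1, ∀ v ∈ Set.Ioo (0:ℝ) 1, 0 ≤ g1 u * h1 v)
    (hl : ∀ u ∈ Set.Ioo (0:ℝ) 1, ∀ v ∈ Set.Ioo (0:ℝ) 1, g1 u * h1 v ≤ f v u)
    (hu : ∀ u ∈ Set.Ioo (0:ℝ) 1, ∀ v ∈ Set.Ioo (0:ℝ) 1, f v u ≤ g2 u * h2 v) :
    (∫ u in (0:ℝ)..1, g1 u) * (∫ v in (0:ℝ)..1, h1 v) ≤ (∫ v in (0:ℝ)..1, ∫ u in (0:ℝ)..1, f v u) ∧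
    (∫ v in (0:ℝ)..1, ∫ u in (0:ℝ)..1, f v u) ≤ (∫ u in (0:ℝ)..1, g2 u) * (∫ v in (0:ℝ)..1, h2 v) := by
  have inner : ∀ v ∈ Set.Ioo (0:ℝ) 1, IntervalIntegrable (f v) volume 0 1 := by
    intro v hv
    have h := ig2.mul_const (h2 v)
    rw [intervalIntegrable_iff_integrableOn_Ioo_of_le zero_le_one] at h ⊢
    refine h.mono' (hf.comp measurable_prodMk_left).aestronglyMeasurable ?_
    refine (ae_restrict_iff' measurableSet_Ioo).2 (Filter.Eventually.of_forall ?_)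
    intro u huu
    rw [Real.norm_of_nonneg ((h0 u huu v hv).trans (hl u huu v hv))]
    exact hu u huu v hv
  have lo : ∀ v ∈ Set.Ioo (0:ℝ) 1, (∫ u in (0:ℝ)..1, g1 u) * h1 v ≤ ∫ u in (0:ℝ)..1, f v u := by
    intro v hv
    rw [← intervalIntegral.integral_mul_const]
    exact intervalIntegral.integral_mono_on_of_le_Ioo zero_le_one (ig1.mul_const _) (inner v hv) (fun u huu => hl u huu v hv)
  have up : ∀ v ∈ Set.Ioo (0:ℝ) 1, ∫ u in (0:ℝ)..1, f v u ≤ (∫ u in (0:ℝ)..1, g2 u) * h2 v := by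
    intro v hv
    rw [← intervalIntegral.integral_mul_const]
    exact intervalIntegral.integral_mono_on_of_le_Ioo zero_le_one (inner v hv) (ig2.mul_const _) (fun u huu => hu u huu v hv)
  have nn : ∀ v ∈ Set.Ioo (0:ℝ) 1, 0 ≤ ∫ u in (0:ℝ)..1, f v u := by
    intro v hv
    have := intervalIntegral.integral_mono_on_of_le_Ioo (f := fun _ => (0:ℝ)) zero_le_one (by simp) (inner v hv) (fun u huu => (h0 u huu v hv).trans (hl u huu v hv))
    simpa using this
  have outer : IntervalIntegrable (fun v => ∫ u in (0:ℝ)..1, f v u) volume 0 1 := by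
    have h := ih2.const_mul (∫ u in (0:ℝ)..1, g2 u)
    rw [intervalIntegrable_iff_integrableOn_Ioo_of_le zero_le_one] at h ⊢
    refine h.mono' ?_ ?_
    · simp only [intervalIntegral.integral_of_le zero_le_one]
      exact (hf.stronglyMeasurable.integral_prod_right (ν := volume.restrict (Set.Ioc 0 1))).aestronglyMeasurable
    · refine (ae_restrict_iff' measurableSet_Ioo).2 (Filter.Eventually.of_forall ?_)
      intro v hv
      rw [Real.norm_of_nonneg (nn v hv)]
      exact up v hv
  rw [← intervalIntegral.integral_const_mul, ← intervalIntegral.integral_const_mul]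
  exact ⟨intervalIntegral.integral_mono_on_of_le_Ioo zero_le_one (ih1.const_mul _) outer lo,
    intervalIntegral.integral_mono_on_of_le_Ioo zero_le_one outer (ih2.const_mul _) up⟩

lemma erk_meas (k x : ℝ) : Measurable (fun v => Erk1 k x v) := by
  unfold Erk1
  apply Measurable.const_mul
  simp only [intervalIntegral.integral_of_le (show (-1:ℝ) ≤ 1 by norm_num)]
  have : Measurable (Function.uncurry (fun v z : ℝ => Real.exp (z * x * v) * (1 - z) ^ (k - 1) * (1 + z) ^ k)) := by
    unfold Function.uncurry; fun_prop
  exact (this.stronglyMeasurable.integral_prod_right (ν := volume.restrict (Set.Ioc (-1) 1))).measurable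

noncomputable def Gf (a q s : ℝ) : ℝ := (s+q)/(1+a*(s+q))
noncomputable def Hf (a p q s : ℝ) : ℝ := s*(p+q)/(1+a*(s+q)) + p*q

lemma grow_up (a p q m r : ℝ) (ha : 0 ≤ a) (hp : 0 < p) (hq : 0 < q) (hm : 0 < m) (hr : 0 ≤ r) :
    Gf a q (r*m) ≤ (1+r) * Gf a q m ∧ Hf a p q (r*m) ≤ (1+r) * Hf a p q m := by
  unfold Gf Hf
  constructor
  · rw [← mul_div_assoc, div_le_div_iff₀ (by positivity) (by positivity), ← sub_nonneg]
    ring_nf; positivity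
  · have : r*m*(p+q)/(1+a*(r*m+q)) ≤ (1+r) * (m*(p+q)/(1+a*(m+q))) := by
      rw [← mul_div_assoc, div_le_div_iff₀ (by positivity) (by positivity), ← sub_nonneg]
      ring_nf; positivity
    have : 0 ≤ r*(p*q) := by positivity
    linarith

lemma grow_lo (a p q m r w : ℝ) (ha : 0 ≤ a) (hp : 0 < p) (hq : 0 < q) (hm : 0 < m) (hr : 0 ≤ r)
    (hw : 0 ≤ w) (hw1 : w ≤ 1) (hwr : w ≤ r) :
    w * Gf a q m ≤ Gf a q (r*m) ∧ w * Hf a p q m ≤ Hf a p q (r*m) := by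
  unfold Gf Hf
  obtain ⟨y, hy, rfl⟩ : ∃ y, 0 ≤ y ∧ r = w + y := ⟨r-w, by linarith, by ring⟩
  obtain ⟨z, hz, hz'⟩ : ∃ z, 0 ≤ z ∧ z = 1 - w := ⟨1-w, by linarith, by ring⟩
  constructor
  · rw [← mul_div_assoc, div_le_div_iff₀ (by positivity) (by positivity), ← sub_nonneg]
    have : ((w+y)*m+q)*(1+a*(m+q)) - w*(m+q)*(1+a*((w+y)*m+q)) =
      y*m + (1-w)*q + a*(1-w)*((m+q)*((w+y)*m+q)) := by ring
    rw [this, ← hz']; positivity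
  · have : w*(m*(p+q)/(1+a*(m+q))) ≤ (w+y)*m*(p+q)/(1+a*((w+y)*m+q)) := by
      rw [← mul_div_assoc, div_le_div_iff₀ (by positivity) (by positivity), ← sub_nonneg]
      have : (w+y)*m*(p+q)*(1+a*(m+q)) - w*(m*(p+q))*(1+a*((w+y)*m+q)) =
        m*(p+q)*(y + a*m*(w+y)*(1-w) + a*q*y) := by ring
      rw [this, ← hz']; positivity
    have : 0 ≤ z*(p*q) := by positivity
    rw [hz'] at this
    linarith

noncomputable def Nf (k p q a b Em Ep u v : ℝ) : ℝ :=
  (p*u*(p+q*(1-v)) * Em + p*(1-u)*(q*(1-v)) * Ep) * ((p*u+q)*(q*v)) * Real.exp (-(b*p*u) - (a+b)*q*v)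
   * ((p*(1-u))*(p+q*(1-v))*(p*u)*(q*(1-v))*(p*u+q)*(q*v))^(k-1)

lemma W_split (k p q u v : ℝ) (hp : 0 < p) (hq : 0 < q) (hu : u ∈ Set.Ioo (0:ℝ) 1) (hv : v ∈ Set.Ioo (0:ℝ) 1) :
    ((p*u+q)*(q*v)) * ((p*(1-u))*(p+q*(1-v))*(p*u)*(q*(1-v))*(p*u+q)*(q*v))^(k-1) =
      (p^(k-1)*p^(k-1)*q^(k-1)*q^k) * (p*u+q)^k * (p+q*(1-v))^(k-1) * (u^(k-1)*(1-u)^(k-1)) * (v^k*(1-v)^(k-1)) := by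
  obtain ⟨hu0, hu1⟩ := hu
  obtain ⟨hv0, hv1⟩ := hv
  have hu' : 0 < 1-u := by linarith
  have hv' : 0 < 1-v := by linarith
  have e : ∀ x : ℝ, 0 < x → x^k = x * x^(k-1) := by
    intro x hx; rw [Real.rpow_sub_one hx.ne']; field_simp
  rw [Real.mul_rpow (by positivity) (by positivity), Real.mul_rpow (by positivity) (by positivity),
    Real.mul_rpow (by positivity) (by positivity), Real.mul_rpow (by positivity) (by positivity),
    Real.mul_rpow (by positivity) (by positivity), Real.mul_rpow (x := p) (y := 1-u) (by positivity) (by positivity),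
    Real.mul_rpow (x := p) (y := u) (by positivity) (by positivity), Real.mul_rpow (x := q) (y := 1-v) (by positivity) (by positivity),
    Real.mul_rpow (x := q) (y := v) (by positivity) (by positivity), e q hq, e (p*u+q) (by positivity), e v hv0]
  ring

set_option maxHeartbeats 4000000 in
lemma point_up (k p q a b Em Ep c0 u v m : ℝ) (hk : 0 < k) (hp : 0 < p) (hq : 0 < q) (ha : 0 ≤ a) (hb : 0 ≤ b)
    (hc0 : 0 < c0)
    (hu : u ∈ Set.Ioo (0:ℝ) 1) (hv : v ∈ Set.Ioo (0:ℝ) 1) (hm : m = p/(1+p*b))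
    (hEm : Em ≤ c0 * (1+a*(p*u+q*(1-v)))^(-(k+1))) (hEp : Ep ≤ c0 * (1+a*(p*u+q*(1-v)))^(-k)) :
    Nf k p q a b Em Ep u v ≤
      (c0 * 2^(k+1) * ((1+2*(k+1))^(k+1) * (1+2*(k+1))^(k+1)) * ((p^(k-1)*p^(k-1)*q^(k-1)*q^k) * (p+q)^(k-1) * (Gf a q m ^k * Hf a p q m)) *
       (Real.exp (-(b*p/2*u)) * u^(k-1)*(1-u)^(k-1))) * (Real.exp (-((a+b)*q/2*v)) * v^(k+1-1)*(1-v)^(k-1)) := by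
  have hW := W_split k p q u v hp hq hu hv
  obtain ⟨hu0, hu1⟩ := hu
  obtain ⟨hv0, hv1⟩ := hv
  have hu' : 0 < 1-u := by linarith
  have hv' : 0 < 1-v := by linarith
  have hm0 : 0 < m := by rw [hm]; positivity
  set K := p^(k-1)*p^(k-1)*q^(k-1)*q^k with hK
  have hK0 : 0 < K := by positivity
  set D := 1+a*(p*u+q*(1-v)) with hD
  have hD0 : 0 < D := by positivity
  set D0 := 1+a*(p*u+q) with hDD
  have hDD0 : 0 < D0 := by positivity
  set r := u*(1+p*b) with hr
  have hr0 : 0 < r := by positivity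
  have hrm : r*m = p*u := by rw [hr, hm]; field_simp
  obtain ⟨g1, g2⟩ := grow_up a p q m r ha hp hq hm0 hr0.le
  rw [hrm] at g1 g2
  have hG0 : 0 < Gf a q m := by unfold Gf; positivity
  have hH0 : 0 < Hf a p q m := by unfold Hf; positivity
  have hGs0 : 0 < Gf a q (p*u) := by unfold Gf; positivity
  have hHs0 : 0 < Hf a p q (p*u) := by unfold Hf; positivity
  set Z := p*u*(p+q*(1-v))/D + p*(1-u)*(q*(1-v)) with hZ
  have hinv : 1/D ≤ (1+a*q*v)/D0 := by
    rw [div_le_div_iff₀ hD0 hDD0, ← sub_nonneg]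
    have : (1+a*q*v)*D - 1*D0 = a*q*v*(a*(p*u+q*(1-v))) := by rw [hD, hDD]; ring
    rw [this]; positivity
  have hbr : p*u*(p+q*(1-v)) * Em + p*(1-u)*(q*(1-v)) * Ep ≤ c0 * D^(-k) * Z := by
    have : D^(-(k+1)) = D^(-k)/D := by
      rw [show -(k+1) = -k-1 by ring, Real.rpow_sub_one hD0.ne']
    rw [this] at hEm
    calc _ ≤ p*u*(p+q*(1-v)) * (c0 * (D^(-k)/D)) + p*(1-u)*(q*(1-v)) * (c0 * D^(-k)) := by gcongr
      _ = _ := by rw [hZ]; ring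
  have hZup : Z ≤ (p+q*(1-v))/(p+q) * ((1+a*q*v) * Hf a p q (p*u)) := by
    have e1 : p*u*(p+q*(1-v))/D ≤ p*u*(p+q*(1-v)) * ((1+a*q*v)/D0) := by
      rw [div_eq_mul_one_div]; gcongr
    have e2 : p*(1-u)*(q*(1-v)) ≤ (p+q*(1-v))/(p+q) * ((1+a*q*v)*(p*q)) := by
      have i1 : (1-v) ≤ (p+q*(1-v))/(p+q) := by
        rw [le_div_iff₀ (by positivity)]; nlinarith
      have i2 : 1-u ≤ 1+a*q*v := by
        have : 0 ≤ a*q*v := by positivity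
        linarith
      calc p*(1-u)*(q*(1-v)) = (1-v)*((1-u)*(p*q)) := by ring
        _ ≤ _ := by gcongr
    have e3 : (p+q*(1-v))/(p+q) * ((1+a*q*v) * Hf a p q (p*u)) = p*u*(p+q*(1-v)) * ((1+a*q*v)/D0) + (p+q*(1-v))/(p+q) * ((1+a*q*v)*(p*q)) := by
      unfold Hf; rw [← hDD]; field_simp
    rw [e3]; exact add_le_add e1 e2
  have hGD : D^(-k) * (p*u+q)^k ≤ (1+a*q*v)^k * Gf a q (p*u)^k := by
    rw [Real.rpow_neg hD0.le, ← Real.inv_rpow hD0.le, ← Real.mul_rpow (by positivity) (by positivity), ← Real.mul_rpow (by positivity) hGs0.le]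
    apply Real.rpow_le_rpow (by positivity) _ hk.le
    unfold Gf; rw [← hDD]
    calc D⁻¹*(p*u+q) = 1/D*(p*u+q) := by ring
      _ ≤ (1+a*q*v)/D0*(p*u+q) := by gcongr
      _ = _ := by ring
  have hpq : (p+q*(1-v))/(p+q) * (p+q*(1-v))^(k-1) ≤ (p+q)^(k-1) := by
    rw [Real.rpow_sub_one (by positivity), Real.rpow_sub_one (by positivity)]
    have : (p+q*(1-v))^k ≤ (p+q)^k := Real.rpow_le_rpow (by positivity) (by nlinarith) hk.le
    calc _ = (p+q*(1-v))^k/(p+q) := by field_simp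
      _ ≤ _ := by gcongr
  have hGH : Gf a q (p*u)^k * Hf a p q (p*u) ≤ (2^(k+1)*(1+b*p*u)^(k+1)) * (Gf a q m ^k * Hf a p q m) := by
    have j1 : 1 + r ≤ 2*(1+b*p*u) := by
      have : 0 ≤ b*p*u := by positivity
      rw [hr]; nlinarith
    calc _ ≤ ((1+r)*Gf a q m)^k * ((1+r)*Hf a p q m) := by gcongr
      _ = (1+r)^(k+1) * (Gf a q m ^k * Hf a p q m) := by
        rw [Real.mul_rpow (by positivity) hG0.le, Real.rpow_add_one (by positivity)]; ring
      _ ≤ (2*(1+b*p*u))^(k+1) * (Gf a q m ^k * Hf a p q m) := by gcongr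
      _ = _ := by rw [Real.mul_rpow (by positivity) (by positivity)]
  have hx1 := pow_exp (k+1) (by linarith) (b*p*u) (by positivity)
  have hx2 := pow_exp (k+1) (by linarith) ((a+b)*q*v) (by positivity)
  have hx3 : (1+a*q*v)^(k+1) ≤ (1+(a+b)*q*v)^(k+1) := by
    have : 0 ≤ b*q*v := by positivity
    apply Real.rpow_le_rpow (by positivity) (by linarith) (by linarith)
  have hexp : Real.exp (-(b*p*u) - (a+b)*q*v) = Real.exp (-(b*p*u)) * Real.exp (-((a+b)*q*v)) := by
    rw [← Real.exp_add]; congr 1; 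
  have hsp : (1+a*q*v)^(k+1) = (1+a*q*v)^k*(1+a*q*v) := Real.rpow_add_one (by positivity) _
  unfold Nf
  calc _ = (p*u*(p+q*(1-v)) * Em + p*(1-u)*(q*(1-v)) * Ep) * (((p*u+q)*(q*v)) * ((p*(1-u))*(p+q*(1-v))*(p*u)*(q*(1-v))*(p*u+q)*(q*v))^(k-1)) * Real.exp (-(b*p*u) - (a+b)*q*v) := by ring
    _ = (p*u*(p+q*(1-v)) * Em + p*(1-u)*(q*(1-v)) * Ep) * (K * (p*u+q)^k * (p+q*(1-v))^(k-1) * (u^(k-1)*(1-u)^(k-1)) * (v^k*(1-v)^(k-1))) * (Real.exp (-(b*p*u)) * Real.exp (-((a+b)*q*v))) := by rw [hW, hexp]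
    _ ≤ (c0 * D^(-k) * ((p+q*(1-v))/(p+q) * ((1+a*q*v) * Hf a p q (p*u)))) * (K * (p*u+q)^k * (p+q*(1-v))^(k-1) * (u^(k-1)*(1-u)^(k-1)) * (v^k*(1-v)^(k-1))) * (Real.exp (-(b*p*u)) * Real.exp (-((a+b)*q*v))) := by
        gcongr
        exact hbr.trans (by gcongr)
    _ = (c0 * K * ((u^(k-1)*(1-u)^(k-1)) * (v^k*(1-v)^(k-1)))) * ((p+q*(1-v))/(p+q) * (p+q*(1-v))^(k-1)) * (D^(-k) * (p*u+q)^k) * ((1+a*q*v) * Hf a p q (p*u)) * (Real.exp (-(b*p*u)) * Real.exp (-((a+b)*q*v))) := by ring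
    _ ≤ (c0 * K * ((u^(k-1)*(1-u)^(k-1)) * (v^k*(1-v)^(k-1)))) * (p+q)^(k-1) * ((1+a*q*v)^k * Gf a q (p*u)^k) * ((1+a*q*v) * Hf a p q (p*u)) * (Real.exp (-(b*p*u)) * Real.exp (-((a+b)*q*v))) := by gcongr
    _ = (c0 * K * ((u^(k-1)*(1-u)^(k-1)) * (v^k*(1-v)^(k-1)))) * (p+q)^(k-1) * (Gf a q (p*u)^k * Hf a p q (p*u)) * (1+a*q*v)^(k+1) * (Real.exp (-(b*p*u)) * Real.exp (-((a+b)*q*v))) := by rw [hsp]; ring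
    _ ≤ (c0 * K * ((u^(k-1)*(1-u)^(k-1)) * (v^k*(1-v)^(k-1)))) * (p+q)^(k-1) * ((2^(k+1)*(1+b*p*u)^(k+1)) * (Gf a q m ^k * Hf a p q m)) * (1+(a+b)*q*v)^(k+1) * (Real.exp (-(b*p*u)) * Real.exp (-((a+b)*q*v))) := by gcongr
    _ = (c0 * K * ((u^(k-1)*(1-u)^(k-1)) * (v^k*(1-v)^(k-1)))) * (p+q)^(k-1) * (2^(k+1) * (Gf a q m ^k * Hf a p q m)) * ((1+b*p*u)^(k+1)*Real.exp (-(b*p*u))) * ((1+(a+b)*q*v)^(k+1) * Real.exp (-((a+b)*q*v))) := by ring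
    _ ≤ (c0 * K * ((u^(k-1)*(1-u)^(k-1)) * (v^k*(1-v)^(k-1)))) * (p+q)^(k-1) * (2^(k+1) * (Gf a q m ^k * Hf a p q m)) * ((1+2*(k+1))^(k+1)*Real.exp (-(b*p*u/2))) * ((1+2*(k+1))^(k+1) * Real.exp (-((a+b)*q*v/2))) := by gcongr
    _ = _ := by
      rw [show k+1-1 = k by ring, show b*p*u/2 = b*p/2*u by ring, show (a+b)*q*v/2 = (a+b)*q/2*v by ring]; ring

set_option maxHeartbeats 4000000 in
lemma point_lo (k p q a b Em Ep c0 u v m : ℝ) (hk : 0 < k) (hp : 0 < p) (hq : 0 < q) (ha : 0 ≤ a) (hb : 0 ≤ b)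
    (hc0 : 0 < c0)
    (hu : u ∈ Set.Ioo (0:ℝ) 1) (hv : v ∈ Set.Ioo (0:ℝ) 1) (hm : m = p/(1+p*b))
    (hEm : c0 * (1+a*(p*u+q*(1-v)))^(-(k+1)) ≤ Em) (hEp : c0 * (1+a*(p*u+q*(1-v)))^(-k) ≤ Ep) :
      (c0 * (1+p*b)^(k+1) * ((p^(k-1)*p^(k-1)*q^(k-1)*q^k) * (p+q)^(k-1) * (Gf a q m ^k * Hf a p q m)) *
       (Real.exp (-((b*p+(k+1)*(1+p*b))*u)) * u^(2*k+1-1)*(1-u)^(k+1-1))) * (Real.exp (-((a+b)*q*v)) * v^(k+1-1)*(1-v)^(2*k+1-1))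
      ≤ Nf k p q a b Em Ep u v := by
  have hW := W_split k p q u v hp hq hu hv
  obtain ⟨hu0, hu1⟩ := hu
  obtain ⟨hv0, hv1⟩ := hv
  have hu' : 0 < 1-u := by linarith
  have hv' : 0 < 1-v := by linarith
  have hm0 : 0 < m := by rw [hm]; positivity
  set K := p^(k-1)*p^(k-1)*q^(k-1)*q^k with hK
  have hK0 : 0 < K := by positivity
  set D := 1+a*(p*u+q*(1-v)) with hD
  have hD0 : 0 < D := by positivity
  set D0 := 1+a*(p*u+q) with hDD
  have hDD0 : 0 < D0 := by positivity
  set r := u*(1+p*b) with hr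
  have hr0 : 0 < r := by positivity
  have hrm : r*m = p*u := by rw [hr, hm]; field_simp
  set w := r * Real.exp (-r) with hw
  have hw0 : 0 < w := by positivity
  have hw1 : w ≤ 1 := by
    have := Real.add_one_le_exp r
    rw [hw, Real.exp_neg, ← div_eq_mul_inv, div_le_one (by positivity)]; linarith
  have hwr : w ≤ r := by
    have : Real.exp (-r) ≤ 1 := Real.exp_le_one_iff.2 (by linarith)
    rw [hw]; nlinarith
  obtain ⟨g1, g2⟩ := grow_lo a p q m r w ha hp hq hm0 hr0.le hw0.le hw1 hwr
  rw [hrm] at g1 g2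
  have hG0 : 0 < Gf a q m := by unfold Gf; positivity
  have hH0 : 0 < Hf a p q m := by unfold Hf; positivity
  have hGs0 : 0 < Gf a q (p*u) := by unfold Gf; positivity
  have hHs0 : 0 < Hf a p q (p*u) := by unfold Hf; positivity
  set Z := p*u*(p+q*(1-v))/D + p*(1-u)*(q*(1-v)) with hZ
  have hDle : D ≤ D0 := by
    rw [hD, hDD]; gcongr; nlinarith
  have hbr : c0 * D^(-k) * Z ≤ p*u*(p+q*(1-v)) * Em + p*(1-u)*(q*(1-v)) * Ep := by
    have : D^(-(k+1)) = D^(-k)/D := by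
      rw [show -(k+1) = -k-1 by ring, Real.rpow_sub_one hD0.ne']
    rw [this] at hEm
    calc _ = p*u*(p+q*(1-v)) * (c0 * (D^(-k)/D)) + p*(1-u)*(q*(1-v)) * (c0 * D^(-k)) := by rw [hZ]; ring
      _ ≤ _ := by gcongr
  have i1 : (1-v)*(p+q) ≤ p+q*(1-v) := by nlinarith
  have hZlo : (1-u)*(1-v)*Hf a p q (p*u) ≤ Z := by
    have e1 : (1-u)*(1-v)*(p*u*(p+q)/D0) ≤ p*u*(p+q*(1-v))/D := by
      calc _ = (1-u)*(p*u*((1-v)*(p+q))/D0) := by ring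
        _ ≤ 1*(p*u*(p+q*(1-v))/D) := by gcongr; linarith
        _ = _ := by ring
    unfold Hf; rw [← hDD, hZ, mul_add]
    apply add_le_add e1 (le_of_eq (by ring))
  have hGD : Gf a q (p*u)^k ≤ D^(-k) * (p*u+q)^k := by
    rw [Real.rpow_neg hD0.le, ← Real.inv_rpow hD0.le, ← Real.mul_rpow (by positivity) (by positivity)]
    apply Real.rpow_le_rpow (by positivity) _ hk.le
    unfold Gf; rw [← hDD]
    calc (p*u+q)/D0 ≤ (p*u+q)/D := by gcongr
      _ = _ := by ring
  have hpq : (1-v)^k * (p+q)^(k-1) ≤ (p+q*(1-v))^(k-1) := by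
    rw [Real.rpow_sub_one (by positivity), Real.rpow_sub_one (by positivity)]
    have : ((1-v)*(p+q))^k ≤ (p+q*(1-v))^k := Real.rpow_le_rpow (by positivity) i1 hk.le
    rw [Real.mul_rpow (by positivity) (by positivity)] at this
    calc _ = (1-v)^k*(p+q)^k/(p+q) := by ring
      _ ≤ _ := by gcongr; nlinarith
  have hGH : w^(k+1) * (Gf a q m ^k * Hf a p q m) ≤ Gf a q (p*u)^k * Hf a p q (p*u) := by
    calc _ = (w*Gf a q m)^k * (w*Hf a p q m) := by
          rw [Real.mul_rpow (by positivity) hG0.le, Real.rpow_add_one (by positivity)]; ring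
      _ ≤ _ := by gcongr
  have hwk : w^(k+1) = u^k*u*(1+p*b)^(k+1)*Real.exp (-((k+1)*(1+p*b)*u)) := by
    rw [hw, Real.mul_rpow (by positivity) (by positivity), ← Real.exp_mul, hr, Real.mul_rpow (by positivity) (by positivity), Real.rpow_add_one hu0.ne']
    congr 2; ring
  have hexp : Real.exp (-(b*p*u) - (a+b)*q*v) = Real.exp (-(b*p*u)) * Real.exp (-((a+b)*q*v)) := by
    rw [← Real.exp_add]; congr 1
  have hexp2 : Real.exp (-((b*p+(k+1)*(1+p*b))*u)) = Real.exp (-(b*p*u)) * Real.exp (-((k+1)*(1+p*b)*u)) := by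
    rw [← Real.exp_add]; congr 1; ring
  have e : ∀ x : ℝ, 0 < x → x^k = x * x^(k-1) := by
    intro x hx; rw [Real.rpow_sub_one hx.ne']; field_simp
  have e2 : ∀ x : ℝ, 0 < x → x^(2*k+1-1) = x^k*x^k := by
    intro x hx; rw [← Real.rpow_add hx]; congr 1; ring
  unfold Nf
  calc _ = (c0 * K * ((u^(k-1)*(1-u)^(k-1)) * (v^k*(1-v)^(k-1)))) * ((1-v)^k * (p+q)^(k-1)) * (w^(k+1) * (Gf a q m ^k * Hf a p q m)) * ((1-u)*(1-v)) * (Real.exp (-(b*p*u)) * Real.exp (-((a+b)*q*v))) := by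
        rw [hwk, hexp2, e2 u hu0, e2 (1-v) hv', show k+1-1 = k by ring]
        rw [e (1-u) hu', show u^k*u^k = u^k*(u*u^(k-1)) by rw [← e u hu0], show (1-v)^k*(1-v)^k = (1-v)^k*((1-v)*(1-v)^(k-1)) by rw [← e (1-v) hv']]
        ring
    _ ≤ (c0 * K * ((u^(k-1)*(1-u)^(k-1)) * (v^k*(1-v)^(k-1)))) * (p+q*(1-v))^(k-1) * (Gf a q (p*u)^k * Hf a p q (p*u)) * ((1-u)*(1-v)) * (Real.exp (-(b*p*u)) * Real.exp (-((a+b)*q*v))) := by gcongr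
    _ ≤ (c0 * K * ((u^(k-1)*(1-u)^(k-1)) * (v^k*(1-v)^(k-1)))) * (p+q*(1-v))^(k-1) * ((D^(-k) * (p*u+q)^k) * Hf a p q (p*u)) * ((1-u)*(1-v)) * (Real.exp (-(b*p*u)) * Real.exp (-((a+b)*q*v))) := by gcongr
    _ = (c0 * D^(-k) * ((1-u)*(1-v)*Hf a p q (p*u))) * (K * (p*u+q)^k * (p+q*(1-v))^(k-1) * (u^(k-1)*(1-u)^(k-1)) * (v^k*(1-v)^(k-1))) * (Real.exp (-(b*p*u)) * Real.exp (-((a+b)*q*v))) := by ring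
    _ ≤ (p*u*(p+q*(1-v)) * Em + p*(1-u)*(q*(1-v)) * Ep) * (K * (p*u+q)^k * (p+q*(1-v))^(k-1) * (u^(k-1)*(1-u)^(k-1)) * (v^k*(1-v)^(k-1))) * (Real.exp (-(b*p*u)) * Real.exp (-((a+b)*q*v))) := by
        gcongr
        exact le_trans (by gcongr) hbr
    _ = (p*u*(p+q*(1-v)) * Em + p*(1-u)*(q*(1-v)) * Ep) * (((p*u+q)*(q*v)) * ((p*(1-u))*(p+q*(1-v))*(p*u)*(q*(1-v))*(p*u+q)*(q*v))^(k-1)) * Real.exp (-(b*p*u) - (a+b)*q*v) := by rw [hW, hexp]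
    _ = _ := by ring

lemma phi_meas (A B : ℝ) : Measurable (Phi A B) := by
  unfold Phi
  simp only [intervalIntegral.integral_of_le (zero_le_one (α := ℝ))]
  have : Measurable (Function.uncurry (fun c s : ℝ => Real.exp (-(c*s)) * s^(A-1) * (1-s)^(B-1))) := by
    unfold Function.uncurry; fun_prop
  exact (this.stronglyMeasurable.integral_prod_right (ν := volume.restrict (Set.Ioc 0 1))).measurable

noncomputable def Nn (k p q a b v u : ℝ) : ℝ :=
  Nf k p q a b (Phi (k+1) k (a*(p*u+q*(1-v)))) (Phi k (k+1) (a*(p*u+q*(1-v)))) u v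

lemma Nn_meas (k p q a b : ℝ) : Measurable (Function.uncurry (Nn k p q a b)) := by
  have h1 := phi_meas (k+1) k
  have h2 := phi_meas k (k+1)
  unfold Nn Nf Function.uncurry
  fun_prop

noncomputable def St (k p q a b : ℝ) : ℝ :=
  ((p+q)*(1+(a+b)*q)/(1+(p+q)*(a+b)) / (1+q*a))^k * (p*((p+q)*(1+(a+b)*q)/(1+(p+q)*(a+b))))

lemma S_cmp (k p q a b : ℝ) (hk : 0 < k) (hp : 0 < p) (hq : 0 < q) (ha : 0 ≤ a) (hb : 0 ≤ b) (m : ℝ) (hm : m = p/(1+p*b)) :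
    Gf a q m ^k * Hf a p q m ≤ 4^(k+1) * St k p q a b ∧ St k p q a b ≤ 4^(k+1) * (Gf a q m ^k * Hf a p q m) := by
  obtain ⟨h1, h2⟩ := alg1 p q a b hp hq ha hb m hm
  obtain ⟨h3, h4⟩ := alg2 p q a b hp hq ha hb m hm
  have hm0 : 0 < m := by rw [hm]; positivity
  have h44 : (4:ℝ)^(k+1) = 4^k*4 := Real.rpow_add_one (by norm_num) _
  unfold Gf Hf St
  set P := (p+q)*(1+(a+b)*q)/(1+(p+q)*(a+b)) with hP
  have hP0 : 0 < P := by positivity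
  constructor
  · calc _ ≤ (4*(P/(1+q*a)))^k * (4*(p*P)) := by gcongr
      _ = _ := by rw [Real.mul_rpow (by norm_num) (by positivity), h44]; ring
  · calc _ ≤ (4 * ((m+q)/(1+a*(m+q))))^k * (4 * (m*(p+q)/(1+a*(m+q)) + p*q)) := by gcongr
      _ = _ := by rw [Real.mul_rpow (by norm_num) (by positivity), h44]; ring

noncomputable def Tt (k p q a b : ℝ) : ℝ :=
  (p^(k-1)*p^(k-1)*q^(k-1)*q^k) * (p+q)^(k-1) * St k p q a b * (1+p*b)^(-k) * (1+(a+b)*q)^(-(k+1))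

lemma T_eq (k p q a b : ℝ) (hp : 0 < p) (hq : 0 < q) (ha : 0 ≤ a) (hb : 0 ≤ b) :
    q*p*Tt k p q a b = (p*(p+q)*q)^(2*k) * (1/((1+p*b)^k*(1+q*a)^k*(1+(p+q)*(a+b))^(k+1))) := by
  unfold Tt St
  rw [Real.div_rpow (by positivity) (by positivity), Real.div_rpow (by positivity) (by positivity),
    Real.mul_rpow (by positivity) (by positivity), Real.rpow_neg (by positivity), Real.rpow_neg (by positivity),
    Real.mul_rpow (by positivity) (by positivity), Real.mul_rpow (by positivity) (by positivity),
    Real.rpow_add_one (by positivity), Real.rpow_add_one (by positivity), Real.rpow_sub_one (by positivity),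
    Real.rpow_sub_one (by positivity), Real.rpow_sub_one (by positivity), two_mul, Real.rpow_add hp, Real.rpow_add hq,
    Real.rpow_add (by positivity : 0 < p+q)]
  field_simp

lemma half_neg (x e : ℝ) (hx : 0 ≤ x) (he : 0 ≤ e) : (1+x/2)^(-e) ≤ 2^e*(1+x)^(-e) := by
  have h : (2:ℝ)^e = (2⁻¹)^(-e) := by rw [Real.inv_rpow (by norm_num), Real.rpow_neg (by norm_num), inv_inv]
  rw [h, ← Real.mul_rpow (by norm_num) (by linarith)]
  exact Real.rpow_le_rpow_of_nonpos (by positivity) (by linarith) (by linarith)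

lemma mid (k : ℝ) (hk : 0 < k) : ∃ c C : ℝ, 0 < c ∧ 0 < C ∧ ∀ p q a b : ℝ, 0 < p → 0 < q → 0 ≤ a → 0 ≤ b →
    c * Tt k p q a b ≤ (∫ v in (0:ℝ)..1, ∫ u in (0:ℝ)..1, Nn k p q a b v u) ∧
    (∫ v in (0:ℝ)..1, ∫ u in (0:ℝ)..1, Nn k p q a b v u) ≤ C * Tt k p q a b := by
  have hk1 : 0 < k+1 := by linarith
  have hk2 : 0 < 2*k+1 := by linarith
  obtain ⟨c1, hc1, H1⟩ := phi_upper (k+1) k hk1 hk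
  obtain ⟨c2, hc2, H2⟩ := phi_upper k (k+1) hk hk1
  obtain ⟨c3, hc3, H3⟩ := phi_lower (k+1) k hk1 hk
  obtain ⟨c4, hc4, H4⟩ := phi_lower k (k+1) hk hk1
  obtain ⟨c5, hc5, H5⟩ := phi_upper k k hk hk
  obtain ⟨c6, hc6, H6⟩ := phi_lower (2*k+1) (k+1) hk2 hk1
  obtain ⟨c7, hc7, H7⟩ := phi_lower (k+1) (2*k+1) hk1 hk2
  set cu := max c1 c2 with hcu
  set cl := min c3 c4 with hcl
  have hcu0 : 0 < cu := lt_max_of_lt_left hc1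
  have hcl0 : 0 < cl := lt_min hc3 hc4
  set X := (1+2*(k+1))^(k+1) * (1+2*(k+1))^(k+1) with hX
  have hX0 : 0 < X := by positivity
  refine ⟨cl * (4^(k+1))⁻¹ * (c6 * (k+2)^(-(2*k+1))) * c7, cu * 2^(k+1) * X * 4^(k+1) * (c5*2^k) * (c1*2^(k+1)), by positivity, by positivity, ?_⟩
  intro p q a b hp hq ha hb
  set m := p/(1+p*b) with hm
  have hm0 : 0 < m := by positivity
  obtain ⟨S1, S2⟩ := S_cmp k p q a b hk hp hq ha hb m hm
  set S := Gf a q m ^k * Hf a p q m with hS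
  have hS0 : 0 < S := by rw [hS]; unfold Gf Hf; positivity
  have hSt0 : 0 < St k p q a b := by unfold St; positivity
  set K := p^(k-1)*p^(k-1)*q^(k-1)*q^k with hK
  have hK0 : 0 < K := by positivity
  set Q := (p+q)^(k-1) with hQ
  have hQ0 : 0 < Q := by positivity
  have hbp : 0 ≤ b*p := by positivity
  have hcq : 0 ≤ (a+b)*q := by positivity
  have hbpk : 0 ≤ b*p+(k+1)*(1+p*b) := by positivity
  obtain ⟨L, U⟩ := sandwich (Nn k p q a b) (Nn_meas k p q a b)
    (fun u => cl * (1+p*b)^(k+1) * (K * Q * S) * (Real.exp (-((b*p+(k+1)*(1+p*b))*u)) * u^(2*k+1-1)*(1-u)^(k+1-1)))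
    (fun v => Real.exp (-((a+b)*q*v)) * v^(k+1-1)*(1-v)^(2*k+1-1))
    (fun u => cu * 2^(k+1) * X * (K * Q * S) * (Real.exp (-(b*p/2*u)) * u^(k-1)*(1-u)^(k-1)))
    (fun v => Real.exp (-((a+b)*q/2*v)) * v^(k+1-1)*(1-v)^(k-1))
    ((phi_int (2*k+1) (k+1) _ hk2 hk1 hbpk).const_mul _)
    (phi_int (k+1) (2*k+1) _ hk1 hk2 hcq)
    ((phi_int k k _ hk hk (by linarith)).const_mul _)
    (phi_int (k+1) k _ hk1 hk (by linarith))
    (by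
      intro u hu v hv
      have := hu.1
      have := hv.1
      have : 0 < 1-u := by linarith [hu.2]
      have : 0 < 1-v := by linarith [hv.2]
      positivity)
    (by
      intro u hu v hv
      have h0 : 0 ≤ a*(p*u+q*(1-v)) := by
        have := hu.1
        have : 0 < 1-v := by linarith [hv.2]
        positivity
      refine point_lo k p q a b _ _ cl u v m hk hp hq ha hb hcl0 hu hv hm ?_ ?_
      · exact le_trans (mul_le_mul_of_nonneg_right (min_le_left _ _) (by positivity)) (H3 _ h0)
      · exact le_trans (mul_le_mul_of_nonneg_right (min_le_right _ _) (by positivity)) (H4 _ h0))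
    (by
      intro u hu v hv
      have h0 : 0 ≤ a*(p*u+q*(1-v)) := by
        have := hu.1
        have : 0 < 1-v := by linarith [hv.2]
        positivity
      refine point_up k p q a b _ _ cu u v m hk hp hq ha hb hcu0 hu hv hm ?_ ?_
      · exact le_trans (H1 _ h0) (mul_le_mul_of_nonneg_right (le_max_left _ _) (by positivity))
      · exact le_trans (H2 _ h0) (mul_le_mul_of_nonneg_right (le_max_right _ _) (by positivity)))
  rw [intervalIntegral.integral_const_mul] at L U
  change cl * (1+p*b)^(k+1) * (K * Q * S) * Phi (2*k+1) (k+1) (b*p+(k+1)*(1+p*b)) * Phi (k+1) (2*k+1) ((a+b)*q) ≤ _ at L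
  change _ ≤ cu * 2^(k+1) * X * (K * Q * S) * Phi k k (b*p/2) * Phi (k+1) k ((a+b)*q/2) at U
  constructor
  · refine le_trans ?_ L
    have l1 : c6 * ((k+2)^(-(2*k+1)) * (1+p*b)^(-(2*k+1))) ≤ Phi (2*k+1) (k+1) (b*p+(k+1)*(1+p*b)) := by
      refine le_trans ?_ (H6 _ hbpk)
      rw [← Real.mul_rpow (by positivity) (by positivity)]
      gcongr c6 * ?_
      apply le_of_eq; congr 1; ring
    have l2 := H7 _ hcq
    have l6 : 0 ≤ Phi (2*k+1) (k+1) (b*p+(k+1)*(1+p*b)) := le_trans (by positivity) l1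
    have l3 : (4^(k+1))⁻¹ * St k p q a b ≤ S := by
      rw [inv_mul_le_iff₀ (by positivity)]; exact S2
    have l4 : (1+p*b)^(-k) = (1+p*b)^(k+1) * (1+p*b)^(-(2*k+1)) := by
      rw [← Real.rpow_add (by positivity)]; congr 1; ring
    calc _ = cl * (1+p*b)^(k+1) * (K * Q * ((4^(k+1))⁻¹ * St k p q a b)) * (c6 * ((k+2)^(-(2*k+1)) * (1+p*b)^(-(2*k+1)))) * (c7 * (1+(a+b)*q)^(-(k+1))) := by
          unfold Tt; rw [← hK, ← hQ, l4]; ring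
      _ ≤ _ := by gcongr
  · refine le_trans U ?_
    have l1 : Phi k k (b*p/2) ≤ c5 * (2^k * (1+p*b)^(-k)) := by
      refine le_trans (H5 _ (by linarith)) ?_
      have := half_neg (b*p) k hbp hk.le
      rw [mul_comm b p] at this ⊢
      gcongr
    have l2 : Phi (k+1) k ((a+b)*q/2) ≤ c1 * (2^(k+1) * (1+(a+b)*q)^(-(k+1))) := by
      refine le_trans (H1 _ (by linarith)) ?_
      have := half_neg ((a+b)*q) (k+1) hcq hk1.le
      gcongr
    obtain ⟨c8, hc8, H8⟩ := phi_lower k k hk hk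
    have l6 : 0 ≤ Phi k k (b*p/2) :=
      le_trans (by positivity) (H8 _ (by linarith : 0 ≤ b*p/2))
    have l5 : 0 ≤ Phi (k+1) k ((a+b)*q/2) :=
      le_trans (by positivity) (H3 _ (by linarith : 0 ≤ (a+b)*q/2))
    calc _ ≤ cu * 2^(k+1) * X * (K * Q * (4^(k+1) * St k p q a b)) * (c5 * (2^k * (1+p*b)^(-k))) * (c1 * (2^(k+1) * (1+(a+b)*q)^(-(k+1)))) := by gcongr
      _ = _ := by unfold Tt; rw [← hK, ← hQ]; ring

lemma Ek_eq (k l3 p q x1 a b : ℝ) (hk : 0 < k) :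
    EkA2 k x1 (x1+a) (x1+a+b) (l3+q+p) (l3+q) l3 =
     (3 * Real.Gamma (3 * k) / ((p*(p+q)*q) ^ (2 * k) * Real.Gamma k ^ 2)) *
      (q * (p * ((Real.Gamma (k + 1/2) / (Real.sqrt Real.pi * Real.Gamma k)) * 2^(2*k) * Real.exp (-(b*(l3+q)+(a+b)*l3)) *
        ∫ v in (0:ℝ)..1, ∫ u in (0:ℝ)..1, Nn k p q a b v u))) := by
  unfold EkA2 Vlam
  rw [show (l3+q+p-(l3+q))*(l3+q+p-l3)*(l3+q-l3) = p*(p+q)*q by ring]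
  congr 1
  have s1 : ∀ F : ℝ → ℝ, ∫ x in l3..(l3+q), F x = q * ∫ v in (0:ℝ)..1, F (q*v+l3) := by
    intro F
    rw [intervalIntegral.mul_integral_comp_mul_add]; congr 1 <;> ring
  have s2 : ∀ F : ℝ → ℝ, ∫ x in (l3+q)..(l3+q+p), F x = p * ∫ v in (0:ℝ)..1, F (p*v+(l3+q)) := by
    intro F
    rw [intervalIntegral.mul_integral_comp_mul_add]; congr 1 <;> ring
  rw [s1]
  congr 1
  simp only [s2]
  rw [intervalIntegral.integral_const_mul]
  congr 1
  rw [← intervalIntegral.integral_const_mul]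
  congr 1; ext v
  rw [← intervalIntegral.integral_const_mul]
  congr 1; ext u
  rw [erk_neg k ((x1-(x1+a))/2) _ hk, erk_pos k (-(x1-(x1+a))/2) _ hk]
  unfold Nn Nf Wk
  set d := p*u+q*(1-v) with hd
  rw [show 2*(-((x1-(x1+a))/2*(p*u+(l3+q)-(q*v+l3)))) = a*d by rw [hd]; ring,
    show 2*(-(x1-(x1+a))/2*(p*u+(l3+q)-(q*v+l3))) = a*d by rw [hd]; ring,
    show -((x1-(x1+a))/2*(p*u+(l3+q)-(q*v+l3))) = a*d/2 by rw [hd]; ring,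
    show (-(x1-(x1+a))/2*(p*u+(l3+q)-(q*v+l3))) = a*d/2 by rw [hd]; ring]
  have hexp : Real.exp (-(b*(l3+q)+(a+b)*l3)) * Real.exp (-(b*p*u)-(a+b)*q*v) = Real.exp (a*d/2) * Real.exp ((x1 + (x1+a) - 2 * (x1+a+b)) * (p*u+(l3+q) + (q*v+l3)) / 2) := by
    rw [← Real.exp_add, ← Real.exp_add]; congr 1; rw [hd]; ring
  have e1 : l3+q+p-(p*u+(l3+q)) = p*(1-u) := by ring
  have e2 : l3+q+p-(q*v+l3) = p+q*(1-v) := by ring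
  have e3 : p*u+(l3+q)-(l3+q) = p*u := by ring
  have e4 : l3+q-(q*v+l3) = q*(1-v) := by ring
  have e5 : p*u+(l3+q)-l3 = p*u+q := by ring
  have e6 : q*v+l3-l3 = q*v := by ring
  rw [e1, e2, e3, e4, e5, e6]
  generalize ((p*(1-u))*(p+q*(1-v))*(p*u)*(q*(1-v))*(p*u+q)*(q*v))^(k-1) = W
  generalize Phi (k+1) k (a*d) = E1
  generalize Phi k (k+1) (a*d) = E2
  generalize Real.Gamma (k + 1/2) / (Real.sqrt Real.pi * Real.Gamma k) * 2^(2*k) = ck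
  linear_combination (-(ck * (p*u*(p+q*(1-v)) * E1 + p*(1-u)*(q*(1-v)) * E2) * ((p*u+q)*(q*v)) * W)) * hexp

/-- Theorem 4.1: sharp estimate of the `A₂` Dunkl kernel. -/
theorem estimate_C321 (k : ℝ) (hk : 0 < k) :
    ∃ C : ℝ, 0 < C ∧ ∀ l1 l2 l3 x1 x2 x3 : ℝ,
      l1 + l2 + l3 = 0 →
      l2 < l1 →
      l3 < l2 →
      x1 + x2 + x3 = 0 →
      x2 ≤ x3 →
      x1 ≤ x2 →
      (C⁻¹ * (Real.exp (l1 * x3 + l2 * x2 + l3 * x1) /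
          ((1 + (l1 - l2) * (x3 - x2)) ^ k * (1 + (l2 - l3) * (x2 - x1)) ^ k
            * (1 + (l1 - l3) * (x3 - x1)) ^ (k + 1)))
        ≤ EkA2 k x1 x2 x3 l1 l2 l3 ∧
      EkA2 k x1 x2 x3 l1 l2 l3
        ≤ C * (Real.exp (l1 * x3 + l2 * x2 + l3 * x1) /
          ((1 + (l1 - l2) * (x3 - x2)) ^ k * (1 + (l2 - l3) * (x2 - x1)) ^ k
            * (1 + (l1 - l3) * (x3 - x1)) ^ (k + 1)))) := by
  obtain ⟨c, C, hc, hC, H⟩ := mid k hk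
  have hG1 : 0 < Real.Gamma (3*k) := Real.Gamma_pos_of_pos (by linarith)
  have hG2 : 0 < Real.Gamma k := Real.Gamma_pos_of_pos hk
  have hG3 : 0 < Real.Gamma (k+1/2) := Real.Gamma_pos_of_pos (by linarith)
  set A := 3 * Real.Gamma (3*k) / Real.Gamma k ^ 2 * ((Real.Gamma (k + 1/2) / (Real.sqrt Real.pi * Real.Gamma k)) * 2^(2*k)) with hA
  have hA0 : 0 < A := by positivity
  refine ⟨A*C + (A*c)⁻¹, by positivity, ?_⟩
  intro l1 l2 l3 x1 x2 x3 hl h21 h32 hx hx23 hx12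
  obtain ⟨q, hq, rfl⟩ : ∃ q, 0 < q ∧ l2 = l3 + q := ⟨l2-l3, by linarith, by ring⟩
  obtain ⟨p, hp, rfl⟩ : ∃ p, 0 < p ∧ l1 = l3 + q + p := ⟨l1-(l3+q), by linarith, by ring⟩
  obtain ⟨a, ha, rfl⟩ : ∃ a, 0 ≤ a ∧ x2 = x1 + a := ⟨x2-x1, by linarith, by ring⟩
  obtain ⟨b, hb, rfl⟩ : ∃ b, 0 ≤ b ∧ x3 = x1 + a + b := ⟨x3-(x1+a), by linarith, by ring⟩
  rw [Ek_eq k l3 p q x1 a b hk]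
  rw [show (l3+q+p)*(x1+a+b)+(l3+q)*(x1+a)+l3*x1 = -(b*(l3+q)+(a+b)*l3) by linear_combination (x1+a+b)*hl,
    show l3+q+p-(l3+q) = p by ring, show x1+a+b-(x1+a) = b by ring, show l3+q-l3 = q by ring,
    show x1+a-x1 = a by ring, show l3+q+p-l3 = p+q by ring, show x1+a+b-x1 = a+b by ring]
  obtain ⟨lo, up⟩ := H p q a b hp hq ha hb
  have hT := T_eq k p q a b hp hq ha hb
  set R := (1+p*b)^k*(1+q*a)^k*(1+(p+q)*(a+b))^(k+1) with hR
  have hR0 : 0 < R := by positivity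
  set I := ∫ v in (0:ℝ)..1, ∫ u in (0:ℝ)..1, Nn k p q a b v u with hI
  set e := Real.exp (-(b*(l3+q)+(a+b)*l3)) with he
  have he0 : 0 < e := Real.exp_pos _
  set Vv := (p*(p+q)*q)^(2*k) with hV
  have hV0 : 0 < Vv := by positivity
  have key : 3 * Real.Gamma (3 * k) / (Vv * Real.Gamma k ^ 2) *
      (q * (p * ((Real.Gamma (k + 1/2) / (Real.sqrt Real.pi * Real.Gamma k)) * 2^(2*k) * e * I))) = A * e * (q*p*I/Vv) := by
    rw [hA]; field_simp
  rw [key]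
  have lo' : c * (1/R) ≤ q*p*I/Vv := by
    rw [le_div_iff₀ hV0]
    calc _ = c * (Vv * (1/R)) := by ring
      _ = q*p*(c*Tt k p q a b) := by rw [← hT]; ring
      _ ≤ _ := by gcongr
  have up' : q*p*I/Vv ≤ C * (1/R) := by
    rw [div_le_iff₀ hV0]
    calc _ ≤ q*p*(C*Tt k p q a b) := by gcongr
      _ = C * (q*p*Tt k p q a b) := by ring
      _ = _ := by rw [hT]; ring
  constructor
  · calc (A*C + (A*c)⁻¹)⁻¹ * (e/R) ≤ ((A*c)⁻¹)⁻¹ * (e/R) := by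
          gcongr
          have : 0 < A*C := by positivity
          linarith
      _ = A * e * (c * (1/R)) := by rw [inv_inv]; ring
      _ ≤ _ := by gcongr
  · calc _ ≤ A * e * (C * (1/R)) := by gcongr
      _ = A*C * (e/R) := by ring
      _ ≤ _ := by
          gcongr
          have : 0 < (A*c)⁻¹ := by positivity
          linarith
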